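/- Lipschitz score implies bounded posterior covariance: suppose that for some t ≥ 0 with α_t > 0 the map y ↦ ∇ log p_t^fac(y) is L_s-Lipschitz on ℝ^k. Then for every y ∈ ℝ^k the posterior covariance satisfies ‖C_t(y)‖_op ≤ (h_t + σ_max² α_t²)(1 + L_s (h_t + σ_max² α_t²)) / α_t², where ‖·‖_op is the spectral norm. (This uses that the eigenvalues of Γ_t = (βᵀΛ_t⁻¹β)⁻¹ lie in [h_t + σ_d² α_t², h_t + σ_1² α_t²] ⊆ (0, h_t + σ_max² α_t²].) -/

import Mathlib

open MeasureTheory Matrix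

noncomputable section

/-- Euclidean (ℓ²) norm on `Fin n → ℝ`. -/
def eucNorm {n : ℕ} (x : Fin n → ℝ) : ℝ := Real.sqrt (∑ i, x i ^ 2)

/-- The `n`-dimensional Gaussian density `φ(x; μ, S)`. -/
def gaussD (n : ℕ) (x μ : Fin n → ℝ) (S : Matrix (Fin n) (Fin n) ℝ) : ℝ :=
  (2 * Real.pi) ^ (-(n : ℝ) / 2) * S.det ^ (-(1 : ℝ) / 2) *
    Real.exp (-((x - μ) ⬝ᵥ (S⁻¹ *ᵥ (x - μ))) / 2)

/-- Gradient as the vector of partial derivatives. -/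
def gradv {n : ℕ} (f : (Fin n → ℝ) → ℝ) (x : Fin n → ℝ) : Fin n → ℝ :=
  fun i => fderiv ℝ f x (Pi.single i 1)

/-- `α_t = e^{-t/2}`. -/
def af (t : ℝ) : ℝ := Real.exp (-t / 2)

/-- `h_t = 1 - α_t²`. -/
def hf (t : ℝ) : ℝ := 1 - af t ^ 2

/-- `Λ_t = diag(h_t + σ_i² α_t²)`. -/
def Lam {d : ℕ} (σ : Fin d → ℝ) (t : ℝ) : Matrix (Fin d) (Fin d) ℝ :=
  Matrix.diagonal fun i => hf t + σ i ^ 2 * af t ^ 2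

/-- `Λ_t^{-1/2}`. -/
def LamInvSqrt {d : ℕ} (σ : Fin d → ℝ) (t : ℝ) : Matrix (Fin d) (Fin d) ℝ :=
  Matrix.diagonal fun i => (Real.sqrt (hf t + σ i ^ 2 * af t ^ 2))⁻¹

/-- `Γ_t = (βᵀ Λ_t⁻¹ β)⁻¹`. -/
def Gam {d k : ℕ} (β : Matrix (Fin d) (Fin k) ℝ) (σ : Fin d → ℝ) (t : ℝ) :
    Matrix (Fin k) (Fin k) ℝ :=
  (βᵀ * (Lam σ t)⁻¹ * β)⁻¹

/-- `T_t = Λ_t^{-1/2} β Γ_t βᵀ Λ_t^{-1/2}`. -/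
def Tproj {d k : ℕ} (β : Matrix (Fin d) (Fin k) ℝ) (σ : Fin d → ℝ) (t : ℝ) :
    Matrix (Fin d) (Fin d) ℝ :=
  LamInvSqrt σ t * β * Gam β σ t * βᵀ * LamInvSqrt σ t

/-- Time-`t` marginal density `p_t`. -/
def pT {d k : ℕ} (β : Matrix (Fin d) (Fin k) ℝ) (σ : Fin d → ℝ)
    (pfac : (Fin k → ℝ) → ℝ) (t : ℝ) (r : Fin d → ℝ) : ℝ :=
  ∫ f : Fin k → ℝ, gaussD d r (af t • (β *ᵥ f)) (Lam σ t) * pfac f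

/-- Smoothed factor density `p_t^fac`. -/
def pTfac {d k : ℕ} (β : Matrix (Fin d) (Fin k) ℝ) (σ : Fin d → ℝ)
    (pfac : (Fin k → ℝ) → ℝ) (t : ℝ) (y : Fin k → ℝ) : ℝ :=
  ∫ f : Fin k → ℝ, gaussD k y (af t • f) (Gam β σ t) * pfac f

/-- Spectral (ℓ² operator) norm of a real matrix. -/
def opNorm {m n : ℕ} (M : Matrix (Fin m) (Fin n) ℝ) : ℝ :=
  ‖LinearMap.toContinuousLinearMap (Matrix.toEuclideanLin M)‖

/-- Normalizing constant of the posterior density `f ↦ φ(y; α_t f, Γ_t) p_fac(f)`. -/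
def Zt {d k : ℕ} (β : Matrix (Fin d) (Fin k) ℝ) (σ : Fin d → ℝ)
    (pfac : (Fin k → ℝ) → ℝ) (t : ℝ) (y : Fin k → ℝ) : ℝ :=
  ∫ f : Fin k → ℝ, gaussD k y (af t • f) (Gam β σ t) * pfac f

/-- Posterior mean `m_t(y)`. -/
def mT {d k : ℕ} (β : Matrix (Fin d) (Fin k) ℝ) (σ : Fin d → ℝ)
    (pfac : (Fin k → ℝ) → ℝ) (t : ℝ) (y : Fin k → ℝ) : Fin k → ℝ :=
  (Zt β σ pfac t y)⁻¹ •
    ∫ f : Fin k → ℝ, (gaussD k y (af t • f) (Gam β σ t) * pfac f) • f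

/-- Posterior covariance matrix `C_t(y)`. -/
def cT {d k : ℕ} (β : Matrix (Fin d) (Fin k) ℝ) (σ : Fin d → ℝ)
    (pfac : (Fin k → ℝ) → ℝ) (t : ℝ) (y : Fin k → ℝ) : Matrix (Fin k) (Fin k) ℝ :=
  Matrix.of fun i j =>
    (Zt β σ pfac t y)⁻¹ *
      ∫ f : Fin k → ℝ,
        gaussD k y (af t • f) (Gam β σ t) * pfac f *
          ((f i - mT β σ pfac t y i) * (f j - mT β σ pfac t y j))

/-!
Shifting the observation `y` by `s v` tilts the posterior of `f` by the exponential of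
`s α ⟨Γ⁻¹v, f⟩`. Hence along the line `y + s v` the log-evidence is a quadratic in `s` plus a
cumulant generating function of the posterior, and its second derivative at `s = 0` is
`α² Var(⟨Γ⁻¹v, f⟩) - ⟨v, Γ⁻¹v⟩`. A Lipschitz score bounds this by `L ‖v‖²`. Taking `v = Γu` and
using `‖Γu‖ ≤ c ‖u‖` gives `α² Var(⟨u, f⟩) ≤ (c + L c²) ‖u‖²`, and the operator norm of the
covariance matrix is the supremum of its quadratic form on unit vectors. The Gaussian
likelihood gives the posterior all exponential moments, so the moments involved are finite.
-/

open ProbabilityTheory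

section EuclideanGeometry

variable {n : ℕ}

lemma eucNorm_eq_norm_toLp (x : Fin n → ℝ) : eucNorm x = ‖WithLp.toLp 2 x‖ := by
  simp [eucNorm, EuclideanSpace.norm_eq]

lemma eucNorm_nonneg (x : Fin n → ℝ) : 0 ≤ eucNorm x :=
  Real.sqrt_nonneg _

lemma eucNorm_smul (c : ℝ) (x : Fin n → ℝ) : eucNorm (c • x) = |c| * eucNorm x := by
  simp only [eucNorm_eq_norm_toLp, WithLp.toLp_smul, norm_smul, Real.norm_eq_abs]

lemma inner_toLp_eq_dotProduct {ι : Type*} [Fintype ι] (x y : ι → ℝ) :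
    inner ℝ (WithLp.toLp 2 x) (WithLp.toLp 2 y) = x ⬝ᵥ y := by
  simp [EuclideanSpace.inner_eq_star_dotProduct, dotProduct_comm]

lemma norm_toLp_sq_eq_dotProduct {ι : Type*} [Fintype ι] (x : ι → ℝ) :
    ‖WithLp.toLp 2 x‖ ^ 2 = x ⬝ᵥ x := by
  rw [← real_inner_self_eq_norm_sq, inner_toLp_eq_dotProduct]

lemma eucNorm_sq (x : Fin n → ℝ) : eucNorm x ^ 2 = x ⬝ᵥ x := by
  rw [eucNorm_eq_norm_toLp, norm_toLp_sq_eq_dotProduct]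

lemma abs_dotProduct_le_eucNorm_mul_eucNorm (x y : Fin n → ℝ) :
    |x ⬝ᵥ y| ≤ eucNorm x * eucNorm y := by
  simpa only [eucNorm_eq_norm_toLp, inner_toLp_eq_dotProduct] using
    abs_real_inner_le_norm (WithLp.toLp 2 x) (WithLp.toLp 2 y)

lemma dotProduct_le_eucNorm_mul_eucNorm (x y : Fin n → ℝ) :
    x ⬝ᵥ y ≤ eucNorm x * eucNorm y :=
  (le_abs_self _).trans (abs_dotProduct_le_eucNorm_mul_eucNorm x y)

lemma fderiv_apply_eq_gradv_dotProduct (F : (Fin n → ℝ) → ℝ) (x v : Fin n → ℝ) :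
    fderiv ℝ F x v = gradv F x ⬝ᵥ v := by
  conv_lhs => rw [pi_eq_sum_univ' v]
  simp only [map_sum, map_smul, smul_eq_mul, dotProduct, gradv, mul_comm]

/-- `F` has an `L`-Lipschitz gradient with respect to the Euclidean norm. -/
def HasLipschitzGrad (L : ℝ) (F : (Fin n → ℝ) → ℝ) : Prop :=
  ∀ y₁ y₂ : Fin n → ℝ, eucNorm (gradv F y₁ - gradv F y₂) ≤ L * eucNorm (y₁ - y₂)

lemma HasLipschitzGrad.nonneg [NeZero n] {L : ℝ} {F : (Fin n → ℝ) → ℝ}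
    (hF : HasLipschitzGrad L F) : 0 ≤ L := by
  have hone : 0 < eucNorm (1 - 0 : Fin n → ℝ) := by simp [eucNorm_eq_norm_toLp]
  exact nonneg_of_mul_nonneg_left ((eucNorm_nonneg _).trans (hF 1 0)) hone

lemma HasLipschitzGrad.abs_fderiv_add_smul_sub_le {L : ℝ} {F : (Fin n → ℝ) → ℝ}
    (hF : HasLipschitzGrad L F) (y v : Fin n → ℝ) (s : ℝ) :
    |fderiv ℝ F (y + s • v) v - fderiv ℝ F y v| ≤ L * eucNorm v ^ 2 * |s| := by
  rw [fderiv_apply_eq_gradv_dotProduct, fderiv_apply_eq_gradv_dotProduct, ← sub_dotProduct]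
  calc |(gradv F (y + s • v) - gradv F y) ⬝ᵥ v|
      ≤ eucNorm (gradv F (y + s • v) - gradv F y) * eucNorm v :=
        abs_dotProduct_le_eucNorm_mul_eucNorm _ v
    _ ≤ L * eucNorm (y + s • v - y) * eucNorm v :=
        mul_le_mul_of_nonneg_right (hF _ y) (eucNorm_nonneg v)
    _ = L * eucNorm v ^ 2 * |s| := by rw [add_sub_cancel_left, eucNorm_smul]; ring

lemma opNorm_le_of_dotProduct_mulVec_le {C : Matrix (Fin n) (Fin n) ℝ} (hC : C.PosSemidef) {M : ℝ}
    (hM : 0 ≤ M) (h : ∀ u, u ⬝ᵥ (C *ᵥ u) ≤ M * eucNorm u ^ 2) : opNorm C ≤ M := by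
  have hsymm : (toEuclideanLin C).toContinuousLinearMap.IsSymmetric :=
    isSymmetric_toEuclideanLin_iff.mpr hC.isHermitian
  rw [opNorm, ContinuousLinearMap.norm_eq_iSup_rayleighQuotient _ hsymm]
  refine ciSup_le fun z => ?_
  have hquad : (toEuclideanLin C).toContinuousLinearMap.reApplyInnerSelf z =
      z.ofLp ⬝ᵥ (C *ᵥ z.ofLp) := by
    simp [ContinuousLinearMap.reApplyInnerSelf, EuclideanSpace.inner_eq_star_dotProduct]
  have hnonneg : 0 ≤ z.ofLp ⬝ᵥ (C *ᵥ z.ofLp) := hC.dotProduct_mulVec_nonneg z.ofLp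
  rw [ContinuousLinearMap.rayleighQuotient, hquad, abs_of_nonneg (by positivity)]
  exact div_le_of_le_mul₀ (by positivity) hM
    (by simpa only [eucNorm_eq_norm_toLp, WithLp.toLp_ofLp] using h z.ofLp)

section Coercive

variable {Q : Matrix (Fin n) (Fin n) ℝ} {c : ℝ}

lemma eucNorm_le_mul_eucNorm_mulVec (hc : 0 ≤ c) (hQ : ∀ x, x ⬝ᵥ x ≤ c * (x ⬝ᵥ (Q *ᵥ x)))
    (v : Fin n → ℝ) : eucNorm v ≤ c * eucNorm (Q *ᵥ v) := by
  rcases (eucNorm_nonneg v).eq_or_lt with hv | hv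
  · rw [← hv]
    exact mul_nonneg hc (eucNorm_nonneg _)
  refine le_of_mul_le_mul_left ?_ hv
  calc eucNorm v * eucNorm v = v ⬝ᵥ v := by rw [← sq, eucNorm_sq]
    _ ≤ c * (v ⬝ᵥ (Q *ᵥ v)) := hQ v
    _ ≤ c * (eucNorm v * eucNorm (Q *ᵥ v)) := by
      gcongr; exact dotProduct_le_eucNorm_mul_eucNorm v _
    _ = eucNorm v * (c * eucNorm (Q *ᵥ v)) := by ring

lemma dotProduct_mulVec_le_mul_eucNorm_mulVec_sq (hc : 0 ≤ c)
    (hQ : ∀ x, x ⬝ᵥ x ≤ c * (x ⬝ᵥ (Q *ᵥ x))) (v : Fin n → ℝ) :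
    v ⬝ᵥ (Q *ᵥ v) ≤ c * eucNorm (Q *ᵥ v) ^ 2 :=
  calc v ⬝ᵥ (Q *ᵥ v) ≤ eucNorm v * eucNorm (Q *ᵥ v) := dotProduct_le_eucNorm_mul_eucNorm v _
    _ ≤ c * eucNorm (Q *ᵥ v) * eucNorm (Q *ᵥ v) :=
      mul_le_mul_of_nonneg_right (eucNorm_le_mul_eucNorm_mulVec hc hQ v) (eucNorm_nonneg _)
    _ = c * eucNorm (Q *ᵥ v) ^ 2 := by ring

lemma dotProduct_self_le_mul_dotProduct_inv_diagonal_mulVec {w : Fin n → ℝ} (hw : ∀ i, 0 < w i)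
    (hwc : ∀ i, w i ≤ c) (x : Fin n → ℝ) : x ⬝ᵥ x ≤ c * (x ⬝ᵥ ((diagonal w)⁻¹ *ᵥ x)) := by
  have hinv : (diagonal w)⁻¹ = diagonal fun i => (w i)⁻¹ := by
    refine inv_eq_left_inv ?_
    simp only [diagonal_mul_diagonal, inv_mul_cancel₀ (hw _).ne', diagonal_one]
  simp only [hinv, dotProduct, mulVec_diagonal, Finset.mul_sum]
  refine Finset.sum_le_sum fun i _ => ?_
  calc x i * x i = w i * (w i)⁻¹ * (x i * x i) := by rw [mul_inv_cancel₀ (hw i).ne', one_mul]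
    _ ≤ c * (w i)⁻¹ * (x i * x i) := by
      have := hw i
      gcongr
      · exact mul_self_nonneg _
      · exact hwc i
    _ = c * (x i * ((w i)⁻¹ * x i)) := by ring

lemma dotProduct_self_le_mul_dotProduct_transpose_mul_mul_mulVec {m : ℕ}
    {β : Matrix (Fin n) (Fin m) ℝ} (hβ : βᵀ * β = 1) (hQ : ∀ x, x ⬝ᵥ x ≤ c * (x ⬝ᵥ (Q *ᵥ x)))
    (x : Fin m → ℝ) : x ⬝ᵥ x ≤ c * (x ⬝ᵥ ((βᵀ * Q * β) *ᵥ x)) := by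
  have hadj (z : Fin n → ℝ) : x ⬝ᵥ (βᵀ *ᵥ z) = (β *ᵥ x) ⬝ᵥ z := by
    rw [dotProduct_mulVec, vecMul_transpose]
  calc x ⬝ᵥ x = (β *ᵥ x) ⬝ᵥ (β *ᵥ x) := by rw [← hadj, mulVec_mulVec, hβ, one_mulVec]
    _ ≤ c * ((β *ᵥ x) ⬝ᵥ (Q *ᵥ (β *ᵥ x))) := hQ _
    _ = c * (x ⬝ᵥ ((βᵀ * Q * β) *ᵥ x)) := by simp only [← mulVec_mulVec, hadj]

end Coercive

end EuclideanGeometry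

section Calculus

lemma iteratedDeriv_two_quadratic (c b q x : ℝ) :
    iteratedDeriv 2 (fun s : ℝ => c - s * b - s ^ 2 * q / 2) x = -q := by
  have hderiv : deriv (fun s : ℝ => c - s * b - s ^ 2 * q / 2) = fun s => -b - s * q := by
    ext s
    have hlin : HasDerivAt (fun s : ℝ => c - s * b) (-b) s := by
      simpa using ((hasDerivAt_id s).mul_const b).const_sub c
    have hsq : HasDerivAt (fun s : ℝ => s ^ 2 * q / 2) (s * q) s :=
      (((hasDerivAt_pow 2 s).mul_const q).div_const 2).congr_deriv (by simp; ring)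
    exact (hlin.fun_sub hsq).deriv
  rw [iteratedDeriv_succ, iteratedDeriv_one, hderiv, deriv_const_sub, deriv_mul_const_field,
    deriv_id'', one_mul]

variable {E : Type*} [NormedAddCommGroup E] [NormedSpace ℝ E]

lemma abs_iteratedDeriv_two_comp_line_le {F : E → ℝ} (hF : Differentiable ℝ F) {y v : E} {C : ℝ}
    (hC : 0 ≤ C)
    (hlip : ∀ s : ℝ, |fderiv ℝ F (y + s • v) v - fderiv ℝ F y v| ≤ C * |s|) :
    |iteratedDeriv 2 (fun s : ℝ => F (y + s • v)) 0| ≤ C := by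
  have hderiv : deriv (fun s : ℝ => F (y + s • v)) = fun s => fderiv ℝ F (y + s • v) v := by
    ext s
    have hline : HasDerivAt (fun s : ℝ => y + s • v) v s := by
      simpa using ((hasDerivAt_id s).smul_const v).const_add y
    exact ((hF _).hasFDerivAt.comp_hasDerivAt s hline).deriv
  rw [iteratedDeriv_succ, iteratedDeriv_one, hderiv, ← Real.norm_eq_abs]
  exact norm_deriv_le_of_lip' hC (.of_forall fun s => by simpa using hlip s)

lemma differentiable_integral_comp_sub {Ω : Type*} [MeasurableSpace Ω] {μ : Measure Ω}
    [IsFiniteMeasure μ] {g : E → ℝ} (hg : ContDiff ℝ 1 g) {B C : ℝ} (hB : ∀ z, ‖g z‖ ≤ B)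
    (hC : ∀ z, ‖fderiv ℝ g z‖ ≤ C) {X : Ω → E} (hX : AEStronglyMeasurable X μ) :
    Differentiable ℝ fun y => ∫ ω, g (y - X ω) ∂μ := by
  intro y
  have hshift (y : E) : AEStronglyMeasurable (fun ω => y - X ω) μ :=
    aestronglyMeasurable_const.sub hX
  have hmeas (y : E) : AEStronglyMeasurable (fun ω => g (y - X ω)) μ :=
    hg.continuous.comp_aestronglyMeasurable (hshift y)
  refine (hasFDerivAt_integral_of_dominated_of_fderiv_le (bound := fun _ => C)
    (F' := fun y ω => fderiv ℝ g (y - X ω)) Filter.univ_mem (.of_forall hmeas)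
    (.of_bound (hmeas y) B (.of_forall fun ω => hB _))
    ((hg.continuous_fderiv one_ne_zero).comp_aestronglyMeasurable (hshift y))
    (.of_forall fun ω z _ => hC _) (integrable_const C)
    (.of_forall fun ω z _ => ?_)).differentiableAt
  exact (hasFDerivAt_comp_sub (X ω)).mpr (hg.differentiable one_ne_zero _).hasFDerivAt

end Calculus

section GaussianBump

variable {E : Type*} [NormedAddCommGroup E] [InnerProductSpace ℝ E]

lemma norm_fderiv_exp_neg_half_norm_sq_le (w : E) :
    ‖fderiv ℝ (fun w : E => Real.exp (-‖w‖ ^ 2 / 2)) w‖ ≤ 1 := by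
  have hderiv : HasFDerivAt (fun w : E => Real.exp (-‖w‖ ^ 2 / 2))
      (-Real.exp (-‖w‖ ^ 2 / 2) • innerSL ℝ w) w := by
    convert ((hasStrictFDerivAt_norm_sq w).hasFDerivAt.const_mul (-1 / 2)).exp using 1
    · ext; ring_nf
    · ext; simp; ring_nf
  rw [hderiv.fderiv, norm_smul, innerSL_apply_norm, norm_neg, Real.norm_eq_abs, Real.abs_exp,
    neg_div, Real.exp_neg, inv_mul_le_one₀ (Real.exp_pos _)]
  calc ‖w‖ ≤ ‖w‖ ^ 2 / 2 + 1 := by nlinarith [sq_nonneg (‖w‖ - 1)]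
    _ ≤ Real.exp (‖w‖ ^ 2 / 2) := Real.add_one_le_exp _

end GaussianBump

section Covariance

variable {ι : Type*} {P : Measure (ι → ℝ)}

/-- Covariance matrix of a random vector with law `P`. -/
def covMatrix (P : Measure (ι → ℝ)) : Matrix ι ι ℝ :=
  Matrix.of fun i j => cov[fun f => f i, fun f => f j; P]

lemma dotProduct_covMatrix_mulVec [Fintype ι] [IsFiniteMeasure P]
    (hP : ∀ i, MemLp (fun f => f i) 2 P) (u : ι → ℝ) :
    u ⬝ᵥ (covMatrix P *ᵥ u) = Var[fun f => u ⬝ᵥ f; P] := by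
  simp only [dotProduct, mulVec, covMatrix, of_apply]
  rw [variance_fun_sum fun i => (hP i).const_mul (u i)]
  simp only [covariance_const_mul_left, covariance_const_mul_right, Finset.mul_sum]
  exact Finset.sum_congr rfl fun i _ => Finset.sum_congr rfl fun j _ => by ring

lemma posSemidef_covMatrix [Finite ι] [IsFiniteMeasure P]
    (hP : ∀ i, MemLp (fun f => f i) 2 P) : (covMatrix P).PosSemidef := by
  have := Fintype.ofFinite ι
  refine .of_dotProduct_mulVec_nonneg (IsHermitian.ext fun i j => ?_) fun u => ?_
  · simp [covMatrix, covariance_comm]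
  · rw [star_trivial, dotProduct_covMatrix_mulVec hP]
    exact variance_nonneg _ _

end Covariance

section GaussianObservation

variable {ι : Type*} [Fintype ι]

/-- Log-likelihood, up to an additive constant, of the location `f` when `y = a f + noise` is
observed and the noise is centred Gaussian with precision (inverse covariance) matrix `Q`. -/
def gaussLogLik (Q : Matrix ι ι ℝ) (a : ℝ) (y f : ι → ℝ) : ℝ :=
  -((y - a • f) ⬝ᵥ (Q *ᵥ (y - a • f))) / 2

/-- Marginal density of the observation `y = a f + noise`, up to a multiplicative constant, when
`f` has law `μ` and the noise has precision matrix `Q`. -/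
def gaussEvidence (μ : Measure (ι → ℝ)) (Q : Matrix ι ι ℝ) (a : ℝ) (y : ι → ℝ) : ℝ :=
  ∫ f, Real.exp (gaussLogLik Q a y f) ∂μ

/-- Conditional law of `f` given the observation `y = a f + noise`, when `f` has law `μ` and the
noise has precision matrix `Q`. -/
def gaussPosterior (μ : Measure (ι → ℝ)) (Q : Matrix ι ι ℝ) (a : ℝ) (y : ι → ℝ) :
    Measure (ι → ℝ) :=
  μ.tilted (gaussLogLik Q a y)

variable {Q : Matrix ι ι ℝ} {a : ℝ} {μ : Measure (ι → ℝ)}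

lemma continuous_gaussLogLik (y : ι → ℝ) : Continuous (gaussLogLik Q a y) := by
  unfold gaussLogLik
  fun_prop

lemma gaussLogLik_nonpos (hQ : Q.PosSemidef) (y f : ι → ℝ) : gaussLogLik Q a y f ≤ 0 := by
  have hquad : 0 ≤ (y - a • f) ⬝ᵥ (Q *ᵥ (y - a • f)) := hQ.dotProduct_mulVec_nonneg (y - a • f)
  unfold gaussLogLik
  linarith

lemma dotProduct_mulVec_comm (hQ : Q.IsHermitian) (x z : ι → ℝ) :
    x ⬝ᵥ (Q *ᵥ z) = (Q *ᵥ x) ⬝ᵥ z := by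
  rw [dotProduct_mulVec, ← mulVec_transpose, ← conjTranspose_eq_transpose_of_trivial, hQ.eq]

lemma gaussLogLik_add_smul (hQ : Q.IsHermitian) (y v f : ι → ℝ) (s : ℝ) :
    gaussLogLik Q a (y + s • v) f = gaussLogLik Q a y f + s * (a * ((Q *ᵥ v) ⬝ᵥ f)) -
      (s * ((Q *ᵥ v) ⬝ᵥ y) + s ^ 2 * (v ⬝ᵥ (Q *ᵥ v)) / 2) := by
  have hv : (y - a • f) ⬝ᵥ (Q *ᵥ v) = (Q *ᵥ v) ⬝ᵥ y - a * ((Q *ᵥ v) ⬝ᵥ f) := by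
    rw [dotProduct_comm, dotProduct_sub, dotProduct_smul, smul_eq_mul]
  have hv' : v ⬝ᵥ (Q *ᵥ (y - a • f)) = (y - a • f) ⬝ᵥ (Q *ᵥ v) := by
    rw [dotProduct_mulVec_comm hQ, dotProduct_comm]
  have hsplit : y + s • v - a • f = (y - a • f) + s • v := by abel
  simp only [gaussLogLik, hsplit, mulVec_add, mulVec_smul, add_dotProduct, dotProduct_add,
    smul_dotProduct, dotProduct_smul, smul_eq_mul, hv', hv]
  ring

open scoped MatrixOrder in
lemma differentiable_gaussEvidence [IsFiniteMeasure μ] (hQ : Q.PosSemidef) :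
    Differentiable ℝ (gaussEvidence μ Q a) := by
  classical
  obtain ⟨R, rfl⟩ := CStarAlgebra.nonneg_iff_eq_star_mul_self.mp hQ.nonneg
  let T : (ι → ℝ) →L[ℝ] EuclideanSpace ℝ ι :=
    (WithLp.linearEquiv 2 ℝ (ι → ℝ)).symm.toLinearMap.toContinuousLinearMap ∘L
      R.mulVecLin.toContinuousLinearMap
  let bump : EuclideanSpace ℝ ι → ℝ := fun w => Real.exp (-‖w‖ ^ 2 / 2)
  have hbump : ContDiff ℝ 1 bump := ((contDiff_norm_sq ℝ).neg.div_const 2).exp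
  have hevidence : gaussEvidence μ (star R * R) a = fun y => ∫ f, (bump ∘ T) (y - a • f) ∂μ := by
    ext y
    refine integral_congr_ae (.of_forall fun f => ?_)
    have hT : T (y - a • f) = WithLp.toLp 2 (R *ᵥ (y - a • f)) := rfl
    simp only [gaussLogLik, Function.comp_apply, bump, hT, norm_toLp_sq_eq_dotProduct]
    rw [← mulVec_mulVec, star_eq_conjTranspose, conjTranspose_eq_transpose_of_trivial,
      dotProduct_mulVec _ Rᵀ, vecMul_transpose]
  have hbound (z : ι → ℝ) : ‖(bump ∘ T) z‖ ≤ 1 := by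
    simp only [Function.comp_apply, bump, Real.norm_eq_abs, Real.abs_exp, Real.exp_le_one_iff]
    linarith [sq_nonneg ‖T z‖]
  have hfderiv (z : ι → ℝ) : ‖fderiv ℝ (bump ∘ T) z‖ ≤ ‖T‖ := by
    rw [fderiv_comp z (hbump.differentiable one_ne_zero _) T.differentiableAt, T.fderiv]
    calc ‖(fderiv ℝ bump (T z)).comp T‖ ≤ ‖fderiv ℝ bump (T z)‖ * ‖T‖ :=
          ContinuousLinearMap.opNorm_comp_le _ _
      _ ≤ 1 * ‖T‖ := by gcongr; exact norm_fderiv_exp_neg_half_norm_sq_le _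
      _ = ‖T‖ := one_mul _
  rw [hevidence]
  exact differentiable_integral_comp_sub (hbump.comp T.contDiff) hbound hfderiv
    (continuous_const_smul a).aestronglyMeasurable

section Posterior

variable [IsFiniteMeasure μ]

lemma integrable_exp_gaussLogLik (hQ : Q.PosSemidef) (y : ι → ℝ) :
    Integrable (fun f => Real.exp (gaussLogLik Q a y f)) μ := by
  refine .of_bound (continuous_gaussLogLik y).rexp.aestronglyMeasurable 1 (.of_forall fun f => ?_)
  rw [Real.norm_eq_abs, Real.abs_exp, Real.exp_le_one_iff]
  exact gaussLogLik_nonpos hQ y f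

lemma integrable_exp_mul_gaussPosterior (hQ : Q.PosSemidef) (y v : ι → ℝ) (s : ℝ) :
    Integrable (fun f => Real.exp (s * (a * ((Q *ᵥ v) ⬝ᵥ f)))) (gaussPosterior μ Q a y) := by
  rw [gaussPosterior, integrable_tilted_iff (integrable_exp_gaussLogLik hQ y)]
  refine ((integrable_exp_gaussLogLik (a := a) hQ (y + s • v)).mul_const
    (Real.exp (s * ((Q *ᵥ v) ⬝ᵥ y) + s ^ 2 * (v ⬝ᵥ (Q *ᵥ v)) / 2))).congr (.of_forall fun f => ?_)
  simp only [smul_eq_mul, ← Real.exp_add, gaussLogLik_add_smul hQ.isHermitian, sub_add_cancel]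

lemma zero_mem_interior_integrableExpSet_gaussPosterior (hQ : Q.PosSemidef) (y v : ι → ℝ) :
    0 ∈ interior (integrableExpSet (fun f => a * ((Q *ᵥ v) ⬝ᵥ f)) (gaussPosterior μ Q a y)) := by
  have huniv : integrableExpSet (fun f => a * ((Q *ᵥ v) ⬝ᵥ f)) (gaussPosterior μ Q a y) =
      Set.univ := Set.eq_univ_of_forall (integrable_exp_mul_gaussPosterior hQ y v)
  simp [huniv]

lemma memLp_dotProduct_gaussPosterior (hQ : Q.PosDef) (ha : a ≠ 0) (y u : ι → ℝ)
    (p : NNReal) : MemLp (fun f => u ⬝ᵥ f) p (gaussPosterior μ Q a y) := by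
  classical
  have hmem : MemLp (fun f => a * ((Q *ᵥ (Q⁻¹ *ᵥ u)) ⬝ᵥ f)) p (gaussPosterior μ Q a y) :=
    memLp_of_mem_interior_integrableExpSet
      (zero_mem_interior_integrableExpSet_gaussPosterior hQ.posSemidef y _) p
  rw [mulVec_mulVec, mul_nonsing_inv Q hQ.det_pos.ne'.isUnit, one_mulVec] at hmem
  simpa [ha] using hmem.const_mul a⁻¹

lemma memLp_eval_gaussPosterior (hQ : Q.PosDef) (ha : a ≠ 0) (y : ι → ℝ) (i : ι)
    (p : NNReal) : MemLp (fun f => f i) p (gaussPosterior μ Q a y) := by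
  classical
  simpa using memLp_dotProduct_gaussPosterior hQ ha y (Pi.single i 1) p

variable [NeZero μ]

lemma isProbabilityMeasure_gaussPosterior (hQ : Q.PosSemidef) (y : ι → ℝ) :
    IsProbabilityMeasure (gaussPosterior μ Q a y) :=
  isProbabilityMeasure_tilted (integrable_exp_gaussLogLik hQ y)

lemma gaussEvidence_pos (hQ : Q.PosSemidef) (y : ι → ℝ) : 0 < gaussEvidence μ Q a y :=
  integral_exp_pos (integrable_exp_gaussLogLik hQ y)

lemma gaussEvidence_add_smul (hQ : Q.PosSemidef) (y v : ι → ℝ) (s : ℝ) :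
    gaussEvidence μ Q a (y + s • v) =
      Real.exp (-(s * ((Q *ᵥ v) ⬝ᵥ y) + s ^ 2 * (v ⬝ᵥ (Q *ᵥ v)) / 2)) *
        (gaussEvidence μ Q a y *
          mgf (fun f => a * ((Q *ᵥ v) ⬝ᵥ f)) (gaussPosterior μ Q a y) s) := by
  have hmgf : gaussEvidence μ Q a y *
      mgf (fun f => a * ((Q *ᵥ v) ⬝ᵥ f)) (gaussPosterior μ Q a y) s =
        ∫ f, Real.exp (gaussLogLik Q a y f + s * (a * ((Q *ᵥ v) ⬝ᵥ f))) ∂μ := by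
    rw [mgf, gaussPosterior, integral_exp_tilted]
    exact mul_div_cancel₀ _ (gaussEvidence_pos hQ y).ne'
  rw [hmgf, ← integral_const_mul]
  refine integral_congr_ae (.of_forall fun f => ?_)
  simp only [gaussLogLik_add_smul hQ.isHermitian, ← Real.exp_add]
  ring_nf

lemma log_gaussEvidence_add_smul (hQ : Q.PosSemidef) (y v : ι → ℝ) (s : ℝ) :
    Real.log (gaussEvidence μ Q a (y + s • v)) =
      Real.log (gaussEvidence μ Q a y) - s * ((Q *ᵥ v) ⬝ᵥ y) - s ^ 2 * (v ⬝ᵥ (Q *ᵥ v)) / 2 +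
        cgf (fun f => a * ((Q *ᵥ v) ⬝ᵥ f)) (gaussPosterior μ Q a y) s := by
  have := isProbabilityMeasure_gaussPosterior (μ := μ) (a := a) hQ y
  have hmgf : 0 < mgf (fun f => a * ((Q *ᵥ v) ⬝ᵥ f)) (gaussPosterior μ Q a y) s :=
    mgf_pos (integrable_exp_mul_gaussPosterior hQ y v s)
  have hevidence := gaussEvidence_pos (μ := μ) (a := a) hQ y
  rw [gaussEvidence_add_smul hQ, Real.log_mul (Real.exp_pos _).ne' (by positivity), Real.log_exp,
    Real.log_mul hevidence.ne' hmgf.ne', cgf]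
  ring

/-- Second-order Tweedie formula. -/
lemma iteratedDeriv_two_log_gaussEvidence (hQ : Q.PosSemidef) (y v : ι → ℝ) :
    iteratedDeriv 2 (fun s : ℝ => Real.log (gaussEvidence μ Q a (y + s • v))) 0 =
      a ^ 2 * Var[fun f => (Q *ᵥ v) ⬝ᵥ f; gaussPosterior μ Q a y] - v ⬝ᵥ (Q *ᵥ v) := by
  have := isProbabilityMeasure_gaussPosterior (μ := μ) (a := a) hQ y
  have hmem := zero_mem_interior_integrableExpSet_gaussPosterior (μ := μ) (a := a) hQ y v
  have hcgf : iteratedDeriv 2 (cgf (fun f => a * ((Q *ᵥ v) ⬝ᵥ f)) (gaussPosterior μ Q a y)) 0 =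
      a ^ 2 * Var[fun f => (Q *ᵥ v) ⬝ᵥ f; gaussPosterior μ Q a y] := by
    rw [← variance_tilted_mul hmem, ← variance_const_mul]
    simp
  simp only [log_gaussEvidence_add_smul hQ]
  rw [iteratedDeriv_fun_add (by fun_prop) (analyticAt_cgf hmem).contDiffAt,
    iteratedDeriv_two_quadratic, hcgf]
  ring

end Posterior

end GaussianObservation

section LipschitzScore

variable {n : ℕ} {Q : Matrix (Fin n) (Fin n) ℝ} {a c L : ℝ} {μ : Measure (Fin n → ℝ)}
  [IsFiniteMeasure μ] [NeZero μ]

lemma sq_mul_variance_gaussPosterior_le (hQ : Q.PosSemidef) (hL : 0 ≤ L)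
    (hlip : HasLipschitzGrad L fun y => Real.log (gaussEvidence μ Q a y))
    (y v : Fin n → ℝ) :
    a ^ 2 * Var[fun f => (Q *ᵥ v) ⬝ᵥ f; gaussPosterior μ Q a y] ≤
      v ⬝ᵥ (Q *ᵥ v) + L * eucNorm v ^ 2 := by
  have hdiff : Differentiable ℝ fun y => Real.log (gaussEvidence μ Q a y) :=
    (differentiable_gaussEvidence hQ).log fun y => (gaussEvidence_pos hQ y).ne'
  have hbound := le_of_abs_le (abs_iteratedDeriv_two_comp_line_le hdiff
    (mul_nonneg hL (sq_nonneg (eucNorm v))) (hlip.abs_fderiv_add_smul_sub_le y v))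
  rw [iteratedDeriv_two_log_gaussEvidence hQ] at hbound
  linarith

theorem opNorm_covMatrix_gaussPosterior_le (hQ : Q.PosDef) (ha : a ≠ 0) (hc : 0 ≤ c)
    (hQc : ∀ x, x ⬝ᵥ x ≤ c * (x ⬝ᵥ (Q *ᵥ x))) (hL : 0 ≤ L)
    (hlip : HasLipschitzGrad L fun y => Real.log (gaussEvidence μ Q a y))
    (y : Fin n → ℝ) :
    opNorm (covMatrix (gaussPosterior μ Q a y)) ≤ c * (1 + L * c) / a ^ 2 := by
  have := isProbabilityMeasure_gaussPosterior (μ := μ) (a := a) hQ.posSemidef y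
  have hmem (i : Fin n) : MemLp (fun f => f i) 2 (gaussPosterior μ Q a y) :=
    memLp_eval_gaussPosterior hQ ha y i 2
  refine opNorm_le_of_dotProduct_mulVec_le (posSemidef_covMatrix hmem) (by positivity) fun u => ?_
  obtain ⟨v, rfl⟩ : ∃ v, Q *ᵥ v = u :=
    ⟨Q⁻¹ *ᵥ u, by rw [mulVec_mulVec, mul_nonsing_inv Q hQ.det_pos.ne'.isUnit, one_mulVec]⟩
  rw [dotProduct_covMatrix_mulVec hmem, div_mul_eq_mul_div, le_div_iff₀' (by positivity)]
  calc a ^ 2 * Var[fun f => (Q *ᵥ v) ⬝ᵥ f; gaussPosterior μ Q a y]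
      ≤ v ⬝ᵥ (Q *ᵥ v) + L * eucNorm v ^ 2 :=
        sq_mul_variance_gaussPosterior_le hQ.posSemidef hL hlip y v
    _ ≤ c * eucNorm (Q *ᵥ v) ^ 2 + L * (c * eucNorm (Q *ᵥ v)) ^ 2 := by
        gcongr
        · exact dotProduct_mulVec_le_mul_eucNorm_mulVec_sq hc hQc v
        · exact eucNorm_nonneg v
        · exact eucNorm_le_mul_eucNorm_mulVec hc hQc v
    _ = c * (1 + L * c) * eucNorm (Q *ᵥ v) ^ 2 := by ring

end LipschitzScore

section DensityPrior

variable {k : ℕ} {S : Matrix (Fin k) (Fin k) ℝ} {p : (Fin k → ℝ) → ℝ}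

/-- The measure on `ℝ^k` with Lebesgue density `p`; negative values of `p` are truncated to `0`. -/
def densityMeasure (p : (Fin k → ℝ) → ℝ) : Measure (Fin k → ℝ) :=
  volume.withDensity fun f => ENNReal.ofReal (p f)

lemma integral_densityMeasure {E : Type*} [NormedAddCommGroup E] [NormedSpace ℝ E]
    (hp : AEMeasurable p) (hp0 : ∀ f, 0 ≤ p f) (g : (Fin k → ℝ) → E) :
    ∫ f, g f ∂densityMeasure p = ∫ f, p f • g f := by
  rw [densityMeasure, integral_withDensity_eq_integral_toReal_smul₀
    hp.ennreal_ofReal (.of_forall fun f => ENNReal.ofReal_lt_top)]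
  simp only [ENNReal.toReal_ofReal (hp0 _)]

lemma isProbabilityMeasure_densityMeasure (hp0 : ∀ f, 0 ≤ p f) (hp1 : ∫ f, p f = 1) :
    IsProbabilityMeasure (densityMeasure p) := by
  refine ⟨?_⟩
  rw [densityMeasure, withDensity_apply _ MeasurableSet.univ, setLIntegral_univ,
    ← ofReal_integral_eq_lintegral_ofReal (integrable_of_integral_eq_one hp1) (.of_forall hp0), hp1,
    ENNReal.ofReal_one]

/-- Normalising constant of the Gaussian density with covariance matrix `S`. -/
def gaussNormConst (S : Matrix (Fin k) (Fin k) ℝ) : ℝ :=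
  (2 * Real.pi) ^ (-(k : ℝ) / 2) * S.det ^ (-(1 : ℝ) / 2)

lemma gaussNormConst_pos (hS : S.PosDef) : 0 < gaussNormConst S := by
  have := hS.det_pos
  unfold gaussNormConst
  positivity

lemma gaussD_smul_eq (y f : Fin k → ℝ) (a : ℝ) :
    gaussD k y (a • f) S = gaussNormConst S * Real.exp (gaussLogLik S⁻¹ a y f) :=
  rfl

lemma integral_gaussD_mul_smul {E : Type*} [NormedAddCommGroup E] [NormedSpace ℝ E]
    (hp : AEMeasurable p) (hp0 : ∀ f, 0 ≤ p f) (a : ℝ) (y : Fin k → ℝ) (g : (Fin k → ℝ) → E) :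
    ∫ f, (gaussD k y (a • f) S * p f) • g f =
      gaussNormConst S • ∫ f, Real.exp (gaussLogLik S⁻¹ a y f) • g f ∂densityMeasure p := by
  rw [integral_densityMeasure hp hp0, ← integral_smul]
  refine integral_congr_ae (.of_forall fun f => ?_)
  simp only [gaussD_smul_eq, smul_smul]
  ring_nf

lemma integral_gaussD_mul (hp : AEMeasurable p) (hp0 : ∀ f, 0 ≤ p f) (a : ℝ) (y : Fin k → ℝ) :
    ∫ f, gaussD k y (a • f) S * p f =
      gaussNormConst S * gaussEvidence (densityMeasure p) S⁻¹ a y := by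
  simpa only [smul_eq_mul, mul_one, gaussEvidence] using
    integral_gaussD_mul_smul hp hp0 a y fun _ => (1 : ℝ)

lemma inv_smul_integral_gaussD_mul_smul {E : Type*} [NormedAddCommGroup E] [NormedSpace ℝ E]
    (hS : S.PosDef) (hp : AEMeasurable p) (hp0 : ∀ f, 0 ≤ p f) (a : ℝ) (y : Fin k → ℝ)
    (g : (Fin k → ℝ) → E) :
    (∫ f, gaussD k y (a • f) S * p f)⁻¹ • ∫ f, (gaussD k y (a • f) S * p f) • g f =
      ∫ f, g f ∂gaussPosterior (densityMeasure p) S⁻¹ a y := by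
  rw [integral_gaussD_mul hp hp0, integral_gaussD_mul_smul hp hp0, smul_smul, mul_inv,
    mul_right_comm, inv_mul_cancel₀ (gaussNormConst_pos hS).ne', one_mul, gaussPosterior,
    integral_tilted, ← integral_smul]
  simp only [smul_smul, gaussEvidence, inv_mul_eq_div]

lemma gradv_log_integral_gaussD_mul (hS : S.PosDef) (hp : AEMeasurable p) (hp0 : ∀ f, 0 ≤ p f)
    [NeZero (densityMeasure p)] [IsFiniteMeasure (densityMeasure p)] (a : ℝ) :
    gradv (fun y => Real.log (∫ f, gaussD k y (a • f) S * p f)) =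
      gradv fun y => Real.log (gaussEvidence (densityMeasure p) S⁻¹ a y) := by
  have hlog (y : Fin k → ℝ) : Real.log (∫ f, gaussD k y (a • f) S * p f) =
      Real.log (gaussNormConst S) + Real.log (gaussEvidence (densityMeasure p) S⁻¹ a y) := by
    rw [integral_gaussD_mul hp hp0, Real.log_mul (gaussNormConst_pos hS).ne'
      (gaussEvidence_pos hS.inv.posSemidef y).ne']
  ext y i
  simp only [gradv, hlog, fderiv_const_add]

end DensityPrior

section FactorModel

variable {d k : ℕ} {β : Matrix (Fin d) (Fin k) ℝ} {σ : Fin d → ℝ} {t : ℝ}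

lemma af_pos (t : ℝ) : 0 < af t :=
  Real.exp_pos _

lemma hf_nonneg (ht : 0 ≤ t) : 0 ≤ hf t := by
  have haf : af t ≤ 1 := Real.exp_le_one_iff.mpr (by linarith)
  exact sub_nonneg.mpr (pow_le_one₀ (af_pos t).le haf)

lemma hf_add_sq_mul_af_sq_pos (ht : 0 ≤ t) {s : ℝ} (hs : 0 < s) : 0 < hf t + s ^ 2 * af t ^ 2 :=
  add_pos_of_nonneg_of_pos (hf_nonneg ht) (mul_pos (pow_pos hs 2) (pow_pos (af_pos t) 2))

lemma posDef_transpose_mul_inv_Lam_mul (hβ : βᵀ * β = 1) (hσ : ∀ i, 0 < σ i) (ht : 0 ≤ t) :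
    (βᵀ * (Lam σ t)⁻¹ * β).PosDef := by
  have hLam : (Lam σ t).PosDef := .diagonal fun i => hf_add_sq_mul_af_sq_pos ht (hσ i)
  have hinj : Function.Injective β.mulVec :=
    Function.LeftInverse.injective (g := βᵀ.mulVec) fun x => by rw [mulVec_mulVec, hβ, one_mulVec]
  simpa only [conjTranspose_eq_transpose_of_trivial] using hLam.inv.conjTranspose_mul_mul_same hinj

lemma posDef_Gam (hβ : βᵀ * β = 1) (hσ : ∀ i, 0 < σ i) (ht : 0 ≤ t) : (Gam β σ t).PosDef :=
  (posDef_transpose_mul_inv_Lam_mul hβ hσ ht).inv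

lemma dotProduct_self_le_mul_dotProduct_inv_Gam_mulVec (hβ : βᵀ * β = 1) (hσ : ∀ i, 0 < σ i)
    {σmax : ℝ} (hσmax : ∀ i, σ i ≤ σmax) (ht : 0 ≤ t) (x : Fin k → ℝ) :
    x ⬝ᵥ x ≤ (hf t + σmax ^ 2 * af t ^ 2) * (x ⬝ᵥ ((Gam β σ t)⁻¹ *ᵥ x)) := by
  rw [Gam, nonsing_inv_nonsing_inv _ (posDef_transpose_mul_inv_Lam_mul hβ hσ ht).det_pos.ne'.isUnit]
  refine dotProduct_self_le_mul_dotProduct_transpose_mul_mul_mulVec hβ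
    (dotProduct_self_le_mul_dotProduct_inv_diagonal_mulVec
      (fun i => hf_add_sq_mul_af_sq_pos ht (hσ i)) fun i => ?_) x
  have := (hσ i).le
  gcongr
  exact hσmax i

variable {pfac : (Fin k → ℝ) → ℝ} [IsFiniteMeasure (densityMeasure pfac)]

lemma mT_apply_eq_integral_gaussPosterior (hΓ : (Gam β σ t).PosDef) (hp : AEMeasurable pfac)
    (hp0 : ∀ f, 0 ≤ pfac f) (y : Fin k → ℝ) (i : Fin k) :
    mT β σ pfac t y i = ∫ f, f i ∂gaussPosterior (densityMeasure pfac) (Gam β σ t)⁻¹ (af t) y := by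
  rw [mT, Zt, inv_smul_integral_gaussD_mul_smul hΓ hp hp0 (af t) y fun f => f]
  exact eval_integral (fun j => memLp_one_iff_integrable.mp
    (memLp_eval_gaussPosterior hΓ.inv (af_pos t).ne' y j 1)) i

lemma cT_eq_covMatrix_gaussPosterior (hΓ : (Gam β σ t).PosDef) (hp : AEMeasurable pfac)
    (hp0 : ∀ f, 0 ≤ pfac f) (y : Fin k → ℝ) :
    cT β σ pfac t y = covMatrix (gaussPosterior (densityMeasure pfac) (Gam β σ t)⁻¹ (af t) y) := by
  ext i j
  simp only [covMatrix, of_apply, covariance, ← mT_apply_eq_integral_gaussPosterior hΓ hp hp0,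
    ← inv_smul_integral_gaussD_mul_smul hΓ hp hp0, cT, Zt, smul_eq_mul]

end FactorModel

theorem lipschitz_score_bounded_posterior_covariance_general {d k : ℕ} (hk : 1 ≤ k)
    {β : Matrix (Fin d) (Fin k) ℝ} (hβ : βᵀ * β = 1) {pfac : (Fin k → ℝ) → ℝ}
    (hpfac_nonneg : ∀ f, 0 ≤ pfac f) (hpfac_prob : (∫ f : Fin k → ℝ, pfac f) = 1)
    {σ : Fin d → ℝ} {σmax : ℝ} (hσpos : ∀ i, 0 < σ i) (hσmax : ∀ i, σ i ≤ σmax)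
    {t : ℝ} (ht : 0 ≤ t) {Ls : ℝ}
    (hlip : HasLipschitzGrad Ls fun y => Real.log (pTfac β σ pfac t y)) (y : Fin k → ℝ) :
    opNorm (cT β σ pfac t y)
      ≤ (hf t + σmax ^ 2 * af t ^ 2) * (1 + Ls * (hf t + σmax ^ 2 * af t ^ 2)) / af t ^ 2 := by
  have : NeZero k := ⟨Nat.one_le_iff_ne_zero.mp hk⟩
  have hp : AEMeasurable pfac := (integrable_of_integral_eq_one hpfac_prob).aemeasurable
  have := isProbabilityMeasure_densityMeasure hpfac_nonneg hpfac_prob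
  have hΓ : (Gam β σ t).PosDef := posDef_Gam hβ hσpos ht
  have hc : 0 ≤ hf t + σmax ^ 2 * af t ^ 2 :=
    add_nonneg (hf_nonneg ht) (mul_nonneg (sq_nonneg _) (sq_nonneg _))
  have hscore : HasLipschitzGrad Ls fun y =>
      Real.log (gaussEvidence (densityMeasure pfac) (Gam β σ t)⁻¹ (af t) y) := by
    simpa only [HasLipschitzGrad, pTfac, gradv_log_integral_gaussD_mul hΓ hp hpfac_nonneg]
      using hlip
  rw [cT_eq_covMatrix_gaussPosterior hΓ hp hpfac_nonneg]
  exact opNorm_covMatrix_gaussPosterior_le hΓ.inv (af_pos t).ne' hc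
    (dotProduct_self_le_mul_dotProduct_inv_Gam_mulVec hβ hσpos hσmax ht) hlip.nonneg hscore y

/-- Lipschitz score implies bounded posterior covariance. -/
theorem lipschitz_score_bounded_posterior_covariance
    (d k : ℕ) (hk1 : 1 ≤ k) (hkd : k ≤ d)
    (β : Matrix (Fin d) (Fin k) ℝ) (hβ : βᵀ * β = 1)
    (pfac : (Fin k → ℝ) → ℝ)
    (hpfac_nonneg : ∀ f, 0 ≤ pfac f)
    (hpfac_prob : (∫ f : Fin k → ℝ, pfac f) = 1)
    (hpfac_smooth : ContDiff ℝ 2 pfac)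
    (hpfac_mom : Integrable (fun f : Fin k → ℝ => eucNorm f ^ 2 * pfac f))
    (σ : Fin d → ℝ) (σmax : ℝ)
    (hσpos : ∀ i, 0 < σ i)
    (hσdec : ∀ i j : Fin d, i ≤ j → σ j ≤ σ i)
    (hσmax : ∀ i, σ i ≤ σmax)
    (B C₁ C₂ : ℝ) (hB : 0 < B) (hC₁ : 0 < C₁) (hC₂ : 0 < C₂)
    (htail : ∀ f : Fin k → ℝ, B ≤ eucNorm f →
      pfac f ≤ (2 * Real.pi) ^ (-(k : ℝ) / 2) * C₁ * Real.exp (-C₂ * eucNorm f ^ 2 / 2))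
    (t : ℝ) (htnn : 0 ≤ t) (hαpos : 0 < af t)
    (Ls : ℝ)
    (hlip : ∀ y₁ y₂ : Fin k → ℝ,
      eucNorm (gradv (fun y => Real.log (pTfac β σ pfac t y)) y₁
          - gradv (fun y => Real.log (pTfac β σ pfac t y)) y₂)
        ≤ Ls * eucNorm (y₁ - y₂)) :
    ∀ y : Fin k → ℝ,
      opNorm (cT β σ pfac t y)
        ≤ (hf t + σmax ^ 2 * af t ^ 2) * (1 + Ls * (hf t + σmax ^ 2 * af t ^ 2)) / af t ^ 2 := by
  exact lipschitz_score_bounded_posterior_covariance_general hk1 hβ hpfac_nonneg hpfac_prob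
    hσpos hσmax htnn hlip
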